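/- Let A be a free abelian group of finite rank (a finitely generated free ℤ-module), and let S be a subgroup (ℤ-submodule) of A such that the quotient A⧸S is torsion-free and S has rank at least 2. Then for every element χ ∈ A there exists s ∈ S such that: (i) s is indivisible in A, i.e. whenever s = n • a with n ∈ ℤ and a ∈ A, one has n = 1 or n = −1; and (ii) s is not an integer multiple of χ, i.e. s ≠ k • χ for every k ∈ ℤ. -/

import Mathlib

/-- A basis vector of a submodule of an abelian group with torsion-free quotient is
indivisible in the ambient group. -/
theorem Module.Basis.eq_one_or_neg_one_of_eq_zsmul {ι A : Type*} [AddCommGroup A]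
    {S : Submodule ℤ A} (htf : NoZeroSMulDivisors ℤ (A ⧸ S)) (b : Module.Basis ι ℤ S)
    (i : ι) {n : ℤ} {a : A} (h : (b i : A) = n • a) : n = 1 ∨ n = -1 := by
  have hn : n ≠ 0 := by
    rintro rfl
    exact b.ne_zero i (Subtype.ext (by simpa using h))
  have hq : n • (Submodule.Quotient.mk a : A ⧸ S) = 0 := by
    rw [← Submodule.Quotient.mk_smul, ← h, Submodule.Quotient.mk_eq_zero]
    exact (b i).2
  have ha : a ∈ S := (Submodule.Quotient.mk_eq_zero S).1
    ((htf.eq_zero_or_eq_zero_of_smul_eq_zero hq).resolve_left hn)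
  have hb : b i = n • (⟨a, ha⟩ : S) := Subtype.ext h
  have h1 : 1 = n * b.repr ⟨a, ha⟩ i := by
    rw [← smul_eq_mul, ← Finsupp.smul_apply, ← map_smul, ← hb, b.repr_self,
      Finsupp.single_eq_same]
  exact Int.isUnit_iff.1 (IsUnit.of_mul_eq_one _ h1.symm)

/-- Two distinct basis vectors of a submodule are not both multiples of one element. -/
theorem Module.Basis.forall_ne_zsmul_or_forall_ne_zsmul {ι A : Type*} [AddCommGroup A]
    {S : Submodule ℤ A} (b : Module.Basis ι ℤ S) {i j : ι} (hij : i ≠ j) (χ : A) :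
    (∀ k : ℤ, (b i : A) ≠ k • χ) ∨ ∀ k : ℤ, (b j : A) ≠ k • χ := by
  by_contra! ⟨⟨k, hk⟩, l, hl⟩
  have hkl : l • b i = k • b j := Subtype.ext (by
    simp only [Submodule.coe_smul, hk, hl]
    exact smul_comm l k χ)
  have hl0 : l = 0 := by
    simpa [hij, hij.symm] using congrArg (fun x => b.repr x i) hkl
  subst hl0
  exact b.ne_zero j (Subtype.ext (by simpa using hl))

/-- If `A` is a finitely generated free abelian group (free `ℤ`-module of finite rank)
and `S` is a submodule with torsion-free quotient `A ⧸ S` and rank at least `2`, then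
for every `χ ∈ A` there is an element `s ∈ S` which is indivisible in `A` and is not
an integer multiple of `χ`. -/
theorem exists_primitive_not_multiple (A : Type*) [AddCommGroup A]
    [Module.Free ℤ A] [Module.Finite ℤ A] (S : Submodule ℤ A)
    (htf : NoZeroSMulDivisors ℤ (A ⧸ S)) (hrk : 2 ≤ Module.finrank ℤ S) (χ : A) :
    ∃ s ∈ S, (∀ (n : ℤ) (a : A), s = n • a → n = 1 ∨ n = -1) ∧
      ∀ k : ℤ, s ≠ k • χ := by
  let b := Module.finBasis ℤ S
  have hij : (⟨0, by omega⟩ : Fin (Module.finrank ℤ S)) ≠ ⟨1, by omega⟩ := by simp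
  obtain h | h := b.forall_ne_zsmul_or_forall_ne_zsmul hij χ
  all_goals exact ⟨_, (b _).2, fun _ _ => b.eq_one_or_neg_one_of_eq_zsmul htf _, h⟩
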